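/- There is a satisfying truth assignment for the 3-SAT* instance I if and only if the constructed restricted-assignment instance I' admits a feasible schedule with makespan at most 2 (equivalently, a schedule in which every machine has load exactly 2, since the total job size equals 2·|M|). -/

import Mathlib

/-!
For a schedule, let `x_j` be true iff `TJob(j)` sits on `TMach(j,0)`. Since `TJob(j)` fills its
machine, the `VJob` of every true literal is forced onto its clause machine. The clause jobs of a
`k`-in-3-clause have total size `6 - k` on three machines of capacity `2`, so each `k`-in-3-clause
contains at most `k` true literals (`trueCount_le`). Every assignment makes exactly `2n` occurrences
true, and `2n = 3m` is the sum of all the numbers `k`, so all these inequalities are equalities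
(`sum_trueCount`, `sum_quota`).

Conversely, a satisfying assignment sends the `VJob`s of true literals to the clause machines and
places the `TJob`s as above; within a clause, a permutation of the clause jobs puts jobs of size `1`
on the machines of the true literals (`exists_perm`).
-/

open Finset

/-- A 3-SAT* instance: `n` variables, `2m` clauses of 3 literals each
(the first `m` are 1-in-3-clauses, the last `m` are 2-in-3-clauses).
`lit i s` is the literal at position `s` of clause `i`, given as a pair
(variable, polarity). The occurrence bijection `occ` maps the pair `(j,t)`
(the `t`-th occurrence of variable `x_j`, positive for `t = 0,1`, negative for
`t = 2,3`) to the corresponding (clause, position) pair; `occ_spec` says the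
literal there is indeed `x_j` with the right polarity. Bijectivity of `occ`
encodes that every literal occurs exactly twice (and forces `6m = 4n`). -/
structure SAT3Star where
  n : ℕ
  m : ℕ
  lit : Fin (2 * m) → Fin 3 → Fin n × Bool
  occ : (Fin n × Fin 4) ≃ (Fin (2 * m) × Fin 3)
  occ_spec : ∀ jt : Fin n × Fin 4,
    lit (occ jt).1 (occ jt).2 = (jt.1, decide ((jt.2 : ℕ) < 2))

/-- `α` satisfies the 3-SAT* instance: every `k`-in-3-clause has exactly `k`
true literals. -/
def SAT3Star.Satisfies (S : SAT3Star) (α : Fin S.n → Bool) : Prop :=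
  ∀ i : Fin (2 * S.m),
    (Finset.univ.filter (fun s : Fin 3 => α (S.lit i s).1 = (S.lit i s).2)).card =
      if (i : ℕ) < S.m then 1 else 2

/-- `⌊t/2⌋` as an element of `Fin 2`. -/
def half (t : Fin 4) : Fin 2 := ⟨(t : ℕ) / 2, by have := t.isLt; omega⟩

/-- Machines of the basic restricted-assignment instance I':
`TMach(j,q)` (left) and `CMach(i,s)` (right). -/
abbrev BMach (S : SAT3Star) := (Fin S.n × Fin 2) ⊕ (Fin (2 * S.m) × Fin 3)

/-- Jobs of I': `TJob(j)` (left), `CJob(i,s)` (middle), `VJob(j,t)` (right). -/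
abbrev BJob (S : SAT3Star) := Fin S.n ⊕ (Fin (2 * S.m) × Fin 3) ⊕ (Fin S.n × Fin 4)

/-- Job sizes in I'. -/
def bSize (S : SAT3Star) : BJob S → ℕ
  | .inl _ => 2
  | .inr (.inl (i, s)) =>
      if (s : ℕ) = 0 then 1
      else if (s : ℕ) = 2 then 2
      else if (i : ℕ) < S.m then 2 else 1
  | .inr (.inr _) => 1

/-- Eligibility in I': `TJob(j)` on `{TMach(j,0), TMach(j,1)}`, `CJob(i,s)` on
`{CMach(i,s') : s'}`, `VJob(j,t)` on `{TMach(j,⌊t/2⌋), CMach(κ(j,t))}`. -/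
def bElig (S : SAT3Star) : BJob S → BMach S → Prop
  | .inl j, .inl (j', _) => j' = j
  | .inl _, .inr _ => False
  | .inr (.inl (i, _)), .inr (i', _) => i' = i
  | .inr (.inl _), .inl _ => False
  | .inr (.inr (j, t)), .inl (j', q) => j' = j ∧ q = half t
  | .inr (.inr (j, t)), .inr c => c = S.occ (j, t)

/-- Load of a machine under a schedule. -/
def bLoad (S : SAT3Star) (σ : BJob S → BMach S) (M : BMach S) : ℕ :=
  ∑ j ∈ Finset.univ.filter (fun j => σ j = M), bSize S j

/-- The number `k` for which clause `i` is a `k`-in-3-clause. -/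
def quota (S : SAT3Star) (i : Fin (2 * S.m)) : ℕ := if (i : ℕ) < S.m then 1 else 2

/-- The number of true literals in clause `i` under `α`. -/
def trueCount (S : SAT3Star) (α : Fin S.n → Bool) (i : Fin (2 * S.m)) : ℕ :=
  (Finset.univ.filter (fun s : Fin 3 => α (S.lit i s).1 = (S.lit i s).2)).card

/-- There are as many clause positions as variable occurrences. -/
lemma six_m_eq (S : SAT3Star) : 4 * S.n = 6 * S.m := by
  have h := Fintype.card_congr S.occ
  simp only [Fintype.card_prod, Fintype.card_fin] at h
  omega

lemma sum_quota (S : SAT3Star) : ∑ i, quota S i = 3 * S.m := by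
  unfold quota
  rw [Fin.sum_univ_eq_sum_range (fun i => if i < S.m then 1 else 2) (2 * S.m), two_mul,
    Finset.sum_range_add]
  have h1 : ∑ x ∈ range S.m, (if x < S.m then 1 else 2) = ∑ x ∈ range S.m, 1 :=
    Finset.sum_congr rfl fun x hx => if_pos (Finset.mem_range.1 hx)
  rw [h1]
  simp
  omega

/-- Exactly two of the four occurrences of each variable are true. -/
lemma sum_trueCount (S : SAT3Star) (α : Fin S.n → Bool) :
    ∑ i, trueCount S α i = 2 * S.n := by
  simp only [trueCount, Finset.card_filter]
  rw [← Fintype.sum_prod_type'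
    (f := fun i s => if α (S.lit i s).1 = (S.lit i s).2 then 1 else 0), ← Equiv.sum_comp S.occ]
  simp only [S.occ_spec]
  rw [Fintype.sum_prod_type]
  have h : ∀ j : Fin S.n, ∑ t : Fin 4, (if α j = decide ((t : ℕ) < 2) then 1 else 0) = 2 := by
    intro j
    cases α j <;> decide
  simp only [h]
  simp [mul_comm]

/-- The clause jobs of a `k`-in-3-clause have total size `6 - k`. -/
lemma sum_clause_size (S : SAT3Star) (i : Fin (2 * S.m)) :
    ∑ s : Fin 3, bSize S (.inr (.inl (i, s))) + quota S i = 6 := by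
  simp only [Fin.sum_univ_three, bSize, quota]
  split_ifs <;> simp_all

/-- If the `VJob`s of all true literals are placed on their clause machines and all loads are at
most `2`, the capacity left over by the clause jobs bounds the number of true literals. -/
lemma trueCount_le (S : SAT3Star) (σ : BJob S → BMach S) (hel : ∀ j, bElig S j (σ j))
    (hload : ∀ M, bLoad S σ M ≤ 2) (α : Fin S.n → Bool)
    (hV : ∀ (j : Fin S.n) (t : Fin 4), α j = decide ((t : ℕ) < 2) →
      σ (.inr (.inr (j, t))) = .inr (S.occ (j, t)))
    (i : Fin (2 * S.m)) : trueCount S α i ≤ quota S i := by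
  set T := Finset.univ.filter (fun s : Fin 3 => α (S.lit i s).1 = (S.lit i s).2) with hT
  set CJ : Fin 3 → BJob S := fun s => .inr (.inl (i, s)) with hCJ
  set VJ : Fin 3 → BJob S := fun s => .inr (.inr (S.occ.symm (i, s))) with hVJ
  have hCinj : Function.Injective CJ := fun a b h => by simpa [hCJ] using h
  have hVinj : Function.Injective VJ := fun a b h => by simpa [hVJ] using h
  have hdisj : Disjoint (univ.image CJ) (T.image VJ) := by
    rw [Finset.disjoint_left]
    intro x hx hx'
    simp only [Finset.mem_image] at hx hx'
    obtain ⟨a, -, rfl⟩ := hx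
    obtain ⟨b, -, hb⟩ := hx'
    simp [hCJ, hVJ] at hb
  have hsum : ∑ s : Fin 3, bLoad S σ (.inr (i, s)) =
      ∑ j ∈ univ.biUnion (fun s : Fin 3 => univ.filter (fun j => σ j = .inr (i, s))),
        bSize S j := by
    rw [Finset.sum_biUnion]
    · rfl
    · intro a _ b _ hab
      rw [Function.onFun, Finset.disjoint_left]
      intro x hx hx'
      simp only [Finset.mem_filter, Finset.mem_univ, true_and] at hx hx'
      rw [hx] at hx'
      exact hab (by simpa using hx')
  have hsub : univ.image CJ ∪ T.image VJ ⊆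
      univ.biUnion (fun s : Fin 3 => univ.filter (fun j => σ j = .inr (i, s))) := by
    intro x hx
    simp only [Finset.mem_union, Finset.mem_image] at hx
    simp only [Finset.mem_biUnion, Finset.mem_filter, Finset.mem_univ, true_and]
    rcases hx with ⟨s, -, rfl⟩ | ⟨s, hs, rfl⟩
    · have h := hel (CJ s)
      rcases hM : σ (CJ s) with q | ⟨i', s'⟩
      · rw [hM] at h
        exact h.elim
      · rw [hM] at h
        exact ⟨s', by rw [show i' = i from h]⟩
    · refine ⟨s, ?_⟩
      have hspec := S.occ_spec (S.occ.symm (i, s))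
      rw [Equiv.apply_symm_apply] at hspec
      have hs' := (Finset.mem_filter.1 hs).2
      rw [hspec] at hs'
      have := hV _ _ hs'
      simpa [hVJ] using this
  have hle := Finset.sum_le_sum_of_subset (f := bSize S) hsub
  rw [← hsum, Finset.sum_union hdisj, Finset.sum_image hCinj.injOn,
    Finset.sum_image hVinj.injOn] at hle
  have h6 : ∑ s : Fin 3, bLoad S σ (.inr (i, s)) ≤ 6 :=
    (Finset.sum_le_sum fun s _ => hload (.inr (i, s))).trans (by simp)
  have hVs : ∑ s ∈ T, bSize S (VJ s) = trueCount S α i := by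
    simp [hVJ, bSize, trueCount, hT]
  have hC := sum_clause_size S i
  simp only [hCJ] at hle
  omega

lemma add_size_le_load (S : SAT3Star) (σ : BJob S → BMach S) {a b : BJob S} (hab : a ≠ b)
    {M : BMach S} (ha : σ a = M) (hb : σ b = M) : bSize S a + bSize S b ≤ bLoad S σ M := by
  rw [← Finset.sum_pair hab]
  apply Finset.sum_le_sum_of_subset
  intro x hx
  simp only [Finset.mem_insert, Finset.mem_singleton] at hx
  rcases hx with rfl | rfl <;> simp [ha, hb]

/-- The assignment making `x_j` true iff `TJob(j)` sits on `TMach(j,0)` is satisfying: it obeys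
`trueCount_le` clause by clause, and both sides of these inequalities have the same sum. -/
lemma exists_assignment (S : SAT3Star) (σ : BJob S → BMach S) (hel : ∀ j, bElig S j (σ j))
    (hload : ∀ M, bLoad S σ M ≤ 2) : ∃ α, S.Satisfies α := by
  let α : Fin S.n → Bool := fun j => decide (σ (.inl j) = .inl (j, 0))
  have hV : ∀ (j : Fin S.n) (t : Fin 4), α j = decide ((t : ℕ) < 2) →
      σ (.inr (.inr (j, t))) = .inr (S.occ (j, t)) := by
    intro j t h
    have hv := hel (.inr (.inr (j, t)))
    rcases hM : σ (.inr (.inr (j, t))) with ⟨j', q⟩ | c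
    · exfalso
      -- The `VJob` would share its machine with the `TJob`, for a load of at least `3`.
      rw [hM] at hv
      obtain ⟨rfl, rfl⟩ : j' = j ∧ q = half t := hv
      have hT : σ (.inl j') = .inl (j', half t) := by
        have ht := hel (.inl j')
        rcases hN : σ (.inl j') with ⟨j₂, q⟩ | c
        · rw [hN] at ht
          obtain rfl : j₂ = j' := ht
          simp only [α, hN] at h
          congr 2
          have key : ∀ (t : Fin 4) (q : Fin 2), (q = 0 ↔ (t : ℕ) < 2) → q = half t := by decide
          exact key t q (by simpa [Nat.lt_succ_iff] using h)
        · rw [hN] at ht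
          exact ht.elim
      have := add_size_le_load S σ (a := .inl j') (b := .inr (.inr (j', t))) (by simp) hT hM
      have := hload (.inl (j', half t))
      simp only [bSize] at *
      omega
    · rw [hM] at hv
      rw [show c = S.occ (j, t) from hv]
  have hle := trueCount_le S σ hel hload α hV
  have heq : ∑ i, trueCount S α i = ∑ i, quota S i := by
    have := six_m_eq S
    rw [sum_trueCount, sum_quota]
    omega
  refine ⟨α, fun i => ?_⟩
  exact (Finset.sum_eq_sum_iff_of_le fun i _ => hle i).1 heq i (Finset.mem_univ i)

lemma perm_one : ∀ b : Fin 3 → Bool, (univ.filter (fun s => b s = true)).card = 1 →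
    ∃ π : Equiv.Perm (Fin 3), ∀ s, (if (π s : ℕ) = 0 then 1 else if (π s : ℕ) = 2 then 2 else 2) +
      (if b s = true then 1 else 0) ≤ 2 := by
  decide

lemma perm_two : ∀ b : Fin 3 → Bool, (univ.filter (fun s => b s = true)).card = 2 →
    ∃ π : Equiv.Perm (Fin 3), ∀ s, (if (π s : ℕ) = 0 then 1 else if (π s : ℕ) = 2 then 2 else 1) +
      (if b s = true then 1 else 0) ≤ 2 := by
  decide

/-- In a satisfied clause, the clause jobs can be distributed, one per machine, so that the
machines of the true literals keep one unit of free capacity. -/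
lemma exists_perm (S : SAT3Star) (α : Fin S.n → Bool) (h : S.Satisfies α) (i : Fin (2 * S.m)) :
    ∃ π : Equiv.Perm (Fin 3), ∀ s, bSize S (.inr (.inl (i, π s))) +
      (if α (S.lit i s).1 = (S.lit i s).2 then 1 else 0) ≤ 2 := by
  have hi := h i
  by_cases hm : (i : ℕ) < S.m
  · rw [if_pos hm] at hi
    simpa [bSize, hm] using
      perm_one (fun s => decide (α (S.lit i s).1 = (S.lit i s).2)) (by simpa using hi)
  · rw [if_neg hm] at hi
    simpa [bSize, hm] using
      perm_two (fun s => decide (α (S.lit i s).1 = (S.lit i s).2)) (by simpa using hi)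

/-- The schedule of an assignment `α`, where `π i` sends each machine of clause `i` to the clause
job that it processes. -/
def schedule (S : SAT3Star) (α : Fin S.n → Bool) (π : Fin (2 * S.m) → Equiv.Perm (Fin 3)) :
    BJob S → BMach S
  | .inl j => .inl (j, if α j = true then 0 else 1)
  | .inr (.inl (i, s)) => .inr (i, (π i).symm s)
  | .inr (.inr (j, t)) =>
      if α j = decide ((t : ℕ) < 2) then .inr (S.occ (j, t)) else .inl (j, half t)

lemma schedule_elig (S : SAT3Star) (α : Fin S.n → Bool)
    (π : Fin (2 * S.m) → Equiv.Perm (Fin 3)) (j : BJob S) :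
    bElig S j (schedule S α π j) := by
  rcases j with j | ⟨i, s⟩ | ⟨j, t⟩
  · simp [schedule, bElig]
  · simp [schedule, bElig]
  · simp only [schedule]
    split_ifs <;> simp [bElig]

/-- The load of a machine, split into the contributions of `TJob`s, `CJob`s and `VJob`s. -/
lemma load_decomp (S : SAT3Star) (σ : BJob S → BMach S) (M : BMach S) :
    bLoad S σ M = (∑ j, if σ (.inl j) = M then 2 else 0) +
      ((∑ c : Fin (2 * S.m) × Fin 3,
        if σ (.inr (.inl c)) = M then bSize S (.inr (.inl c)) else 0) +
      ∑ v : Fin S.n × Fin 4, if σ (.inr (.inr v)) = M then 1 else 0) := by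
  rw [bLoad, Finset.sum_filter, Fintype.sum_sum_type, Fintype.sum_sum_type]
  rfl

/-- `TMach(j,q)` processes either `TJob(j)` alone or the two `VJob`s of a false literal. -/
lemma load_T (S : SAT3Star) (α : Fin S.n → Bool) (π : Fin (2 * S.m) → Equiv.Perm (Fin 3))
    (j : Fin S.n) (q : Fin 2) : bLoad S (schedule S α π) (.inl (j, q)) ≤ 2 := by
  have hv : ∀ (j' : Fin S.n) (t : Fin 4), (schedule S α π (.inr (.inr (j', t))) = .inl (j, q)) ↔
      j' = j ∧ (α j ≠ decide ((t : ℕ) < 2) ∧ half t = q) := by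
    intro j' t
    simp only [schedule]
    split_ifs with h
    · simp only [false_iff]
      rintro ⟨rfl, h', -⟩
      exact h' h
    · simp only [Sum.inl.injEq, Prod.mk.injEq]
      constructor
      · rintro ⟨rfl, h'⟩
        exact ⟨rfl, h, h'⟩
      · rintro ⟨rfl, -, h'⟩
        exact ⟨rfl, h'⟩
  have ht : ∀ j' : Fin S.n, (schedule S α π (.inl j') = .inl (j, q)) ↔
      j' = j ∧ (if α j = true then (0 : Fin 2) else 1) = q := by
    intro j'
    simp only [schedule, Sum.inl.injEq, Prod.mk.injEq]
    constructor <;> (rintro ⟨rfl, h⟩; exact ⟨rfl, h⟩)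
  rw [load_decomp, Fintype.sum_prod_type (f := fun v : Fin S.n × Fin 4 => _)]
  simp only [hv, ht, ite_and]
  simp only [Finset.sum_ite_irrel, Finset.sum_const_zero, Finset.sum_ite_eq', Finset.mem_univ,
    if_true]
  have hc : ∀ c, schedule S α π (.inr (.inl c)) ≠ .inl (j, q) := fun c => by simp [schedule]
  simp only [hc, if_false, Finset.sum_const_zero]
  generalize α j = b
  clear hv ht hc
  revert b q
  decide

/-- `CMach(i,s)` processes one clause job and, if the literal there is true, its `VJob`. -/
lemma load_C (S : SAT3Star) (α : Fin S.n → Bool) (π : Fin (2 * S.m) → Equiv.Perm (Fin 3))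
    (i : Fin (2 * S.m)) (s : Fin 3)
    (h : bSize S (.inr (.inl (i, π i s))) +
      (if α (S.lit i s).1 = (S.lit i s).2 then 1 else 0) ≤ 2) :
    bLoad S (schedule S α π) (.inr (i, s)) ≤ 2 := by
  have hc : ∀ c : Fin (2 * S.m) × Fin 3,
      (schedule S α π (.inr (.inl c)) = .inr (i, s)) ↔ c = (i, π i s) := by
    rintro ⟨i', s'⟩
    simp only [schedule, Sum.inr.injEq, Prod.mk.injEq]
    constructor <;> (rintro ⟨rfl, e⟩; refine ⟨rfl, ?_⟩)
    · rw [← e, Equiv.apply_symm_apply]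
    · rw [e, Equiv.symm_apply_apply]
  have hv : ∀ v : Fin S.n × Fin 4, (schedule S α π (.inr (.inr v)) = .inr (i, s)) ↔
      v = S.occ.symm (i, s) ∧ α (S.lit i s).1 = (S.lit i s).2 := by
    rintro ⟨j, t⟩
    have hspec := S.occ_spec (j, t)
    rw [Equiv.eq_symm_apply]
    simp only [schedule]
    split_ifs with h
    · simp only [Sum.inr.injEq]
      constructor
      · intro e
        rw [e] at hspec
        exact ⟨e, by rw [hspec]; exact h⟩
      · exact fun e => e.1
    · simp only [false_iff]
      rintro ⟨e, h'⟩
      rw [e] at hspec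
      rw [hspec] at h'
      exact h h'
  have ht : ∀ j, schedule S α π (.inl j) ≠ .inr (i, s) := fun j => by simp [schedule]
  rw [load_decomp]
  simp only [hc, hv, ht, ite_and, if_false, Finset.sum_const_zero, Finset.sum_ite_eq',
    Finset.mem_univ, if_true, zero_add]
  exact h

/-- the 3-SAT* instance is satisfiable iff I' admits a feasible schedule
with makespan at most 2. -/
theorem statement5 (S : SAT3Star) :
    (∃ α, S.Satisfies α) ↔
      (∃ σ : BJob S → BMach S, (∀ j, bElig S j (σ j)) ∧ ∀ M, bLoad S σ M ≤ 2) := by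
  constructor
  · rintro ⟨α, hα⟩
    choose π hπ using exists_perm S α hα
    refine ⟨schedule S α π, schedule_elig S α π, ?_⟩
    rintro (⟨j, q⟩ | ⟨i, s⟩)
    · exact load_T S α π j q
    · exact load_C S α π i s (hπ i s)
  · rintro ⟨σ, hel, hload⟩
    exact exists_assignment S σ hel hload
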